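/- arXiv:1703.01384 — 2 statements merged into one kernel-verified Lean document; each statement's English description precedes it below -/
import Mathlib

section
/- Fix κ > 0 and λ ∈ ℂ, and set s(r) = sinh(κr)/κ. For j ∈ ℕ and smooth f : (0,∞) → ℂ define Q_j f = −s^{−2j}(s^{2j} f′)′ − (j²κ² + λ²) f. Then for every j ∈ ℕ, every smooth f : (0,∞) → ℂ and every r > 0, Q_{j+1}( s^{−1} f′ )(r) = s(r)^{−1} · (Q_j f)′(r). -/
/-!
Write `h = s'/s` and `L_m f = s⁻ᵐ (sᵐ f')' = f'' + m h f'`. Conjugation by `s⁻¹` turns `d/dr` into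
`d/dr - h`, so with `g = f'`
`s L_{m+2} (s⁻¹ g) = (g' - h g)' + (m + 1) h (g' - h g) = g'' + m h g' - (h' + (m + 1) h²) g`,
while `(L_m f)' = g'' + m h g' + m h' g`. As `h' + h² = s''/s`, the two differ by
`-(m + 1) (s''/s) f'`. If `s'' = c s` and `m = 2j`, this is `-(2j + 1) c f'`, which the shift
`j² c` of the spectral parameter compensates, because `(j + 1)² - j² = 2j + 1`.
-/

open scoped Topology

section WarpedProduct

variable {𝕜 𝕜' E : Type*} [NontriviallyNormedField 𝕜] [NontriviallyNormedField 𝕜']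
  [NormedAlgebra 𝕜 𝕜'] [NormedAddCommGroup E] [NormedSpace 𝕜 E] [NormedSpace 𝕜' E]
  {s : 𝕜 → 𝕜'} {f g : 𝕜 → E} {r : 𝕜}

/-- The radial part `s⁻ᵐ (sᵐ f')'` of the Laplacian of a warped product metric `dr² + s(r)² h` in
dimension `m + 1`. The warping function takes values in a field extension of that of `r`, so that
complex coefficients are available for a real variable. -/
noncomputable def radialLaplacian (s : 𝕜 → 𝕜') (m : ℕ) (f : 𝕜 → E) (r : 𝕜) : E :=
  (s r ^ m)⁻¹ • deriv (fun ρ => s ρ ^ m • deriv f ρ) r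

/-- The operator `-Δ - j² c - z` on radial functions of a `(2j + 1)`-dimensional warped product.
For `s'' = c s`, i.e. curvature `-c`, it is the operator `Q_j` of the paper, with `c = κ²` and
`z = λ²` there. -/
noncomputable def radialHelmholtz (s : 𝕜 → 𝕜') (c z : 𝕜') (j : ℕ) (f : 𝕜 → E) (r : 𝕜) : E :=
  -radialLaplacian s (2 * j) f r - ((j : 𝕜') ^ 2 * c + z) • f r

theorem eventually_differentiableAt_and_ne_zero (hs : ContDiffAt 𝕜 1 s r) (hsr : s r ≠ 0) :
    ∀ᶠ x in 𝓝 r, DifferentiableAt 𝕜 s x ∧ s x ≠ 0 :=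
  ((hs.eventually (by simp)).mono fun _ hx => hx.differentiableAt one_ne_zero).and
    (hs.continuousAt.eventually_ne hsr)

theorem differentiableAt_deriv (hf : ContDiffAt 𝕜 2 f r) : DifferentiableAt 𝕜 (deriv f) r :=
  (hf.derivWithin (m := 1) (by norm_num)).differentiableAt one_ne_zero

theorem hasDerivAt_logDeriv (hs : DifferentiableAt 𝕜 s r)
    (hs' : DifferentiableAt 𝕜 (deriv s) r) (hsr : s r ≠ 0) :
    HasDerivAt (logDeriv s) (deriv (deriv s) r / s r - logDeriv s r ^ 2) r := by
  refine (hs'.hasDerivAt.div hs.hasDerivAt hsr).congr_deriv ?_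
  rw [logDeriv_apply]
  field_simp

variable [IsScalarTower 𝕜 𝕜' E]

theorem deriv_inv_smul (hs : DifferentiableAt 𝕜 s r) (hsr : s r ≠ 0)
    (hg : DifferentiableAt 𝕜 g r) :
    deriv (fun x => (s x)⁻¹ • g x) r = (s r)⁻¹ • (deriv g r - logDeriv s r • g r) := by
  rw [deriv_fun_smul (hs.fun_inv hsr) hg, deriv_fun_inv'' hs hsr, logDeriv_apply]
  match_scalars <;> field_simp

theorem eventuallyEq_deriv_inv_smul (hs : ContDiffAt 𝕜 1 s r) (hsr : s r ≠ 0)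
    (hg : ContDiffAt 𝕜 1 g r) :
    deriv (fun x => (s x)⁻¹ • g x) =ᶠ[𝓝 r]
      fun x => (s x)⁻¹ • (deriv g x - logDeriv s x • g x) := by
  filter_upwards [eventually_differentiableAt_and_ne_zero hs hsr, hg.eventually (by simp)]
    with x hx hgx
  exact deriv_inv_smul hx.1 hx.2 (hgx.differentiableAt one_ne_zero)

theorem hasDerivAt_deriv_inv_smul (hs : ContDiffAt 𝕜 2 s r) (hsr : s r ≠ 0)
    (hg : ContDiffAt 𝕜 2 g r) :
    HasDerivAt (deriv fun x => (s x)⁻¹ • g x)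
      ((s r)⁻¹ • (deriv (deriv g) r - (2 * logDeriv s r) • deriv g r +
        (2 * logDeriv s r ^ 2 - deriv (deriv s) r / s r) • g r)) r := by
  have hs1 : DifferentiableAt 𝕜 s r := hs.differentiableAt two_ne_zero
  have hg' : HasDerivAt (fun x => deriv g x - logDeriv s x • g x) _ r :=
    (differentiableAt_deriv hg).hasDerivAt.fun_sub
      ((hasDerivAt_logDeriv hs1 (differentiableAt_deriv hs) hsr).fun_smul
        (hg.differentiableAt two_ne_zero).hasDerivAt)
  have hderiv := eventuallyEq_deriv_inv_smul (hs.of_le one_le_two) hsr (hg.of_le one_le_two)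
  refine HasDerivAt.congr_of_eventuallyEq ?_ hderiv
  convert ((hs1.fun_inv hsr).fun_smul hg'.differentiableAt).hasDerivAt using 1
  rw [deriv_inv_smul hs1 hsr hg'.differentiableAt, hg'.deriv]
  module

theorem radialLaplacian_eq (hs : DifferentiableAt 𝕜 s r) (hsr : s r ≠ 0)
    (hf : DifferentiableAt 𝕜 (deriv f) r) (m : ℕ) :
    radialLaplacian s m f r = deriv (deriv f) r + (m * logDeriv s r) • deriv f r := by
  rw [radialLaplacian, deriv_fun_smul (hs.fun_pow m) hf, ← logDeriv_fun_pow hs m, logDeriv_apply]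
  match_scalars <;> field_simp

theorem hasDerivAt_radialLaplacian (hs : ContDiffAt 𝕜 2 s r) (hsr : s r ≠ 0)
    (hf : ContDiffAt 𝕜 3 f r) (m : ℕ) :
    HasDerivAt (radialLaplacian s m f)
      (deriv (deriv (deriv f)) r + (m * logDeriv s r) • deriv (deriv f) r +
        (m * (deriv (deriv s) r / s r - logDeriv s r ^ 2)) • deriv f r) r := by
  have hf' : ContDiffAt 𝕜 2 (deriv f) r := hf.derivWithin (by norm_num)
  have hlap : radialLaplacian s m f =ᶠ[𝓝 r]
      fun x => deriv (deriv f) x + (m * logDeriv s x) • deriv f x := by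
    filter_upwards [eventually_differentiableAt_and_ne_zero (hs.of_le one_le_two) hsr,
      hf'.eventually (by simp)] with x hx hfx
    exact radialLaplacian_eq hx.1 hx.2 (hfx.differentiableAt two_ne_zero) m
  have hlog := hasDerivAt_logDeriv (hs.differentiableAt two_ne_zero) (differentiableAt_deriv hs) hsr
  refine HasDerivAt.congr_of_eventuallyEq ?_ hlap
  convert (differentiableAt_deriv hf').hasDerivAt.fun_add
    ((hlog.const_mul (m : 𝕜')).fun_smul
      (hf'.differentiableAt two_ne_zero).hasDerivAt) using 1
  module

theorem radialLaplacian_add_two_inv_smul_deriv (hs : ContDiffAt 𝕜 2 s r) (hsr : s r ≠ 0)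
    (hf : ContDiffAt 𝕜 3 f r) (m : ℕ) :
    radialLaplacian s (m + 2) (fun x => (s x)⁻¹ • deriv f x) r =
      (s r)⁻¹ • (deriv (radialLaplacian s m f) r -
        ((m + 1) * (deriv (deriv s) r / s r)) • deriv f r) := by
  have hf' : ContDiffAt 𝕜 2 (deriv f) r := hf.derivWithin (by norm_num)
  have hs1 : DifferentiableAt 𝕜 s r := hs.differentiableAt two_ne_zero
  have hg := hasDerivAt_deriv_inv_smul hs hsr hf'
  rw [radialLaplacian_eq hs1 hsr hg.differentiableAt, hg.deriv,
    deriv_inv_smul hs1 hsr (hf'.differentiableAt two_ne_zero),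
    (hasDerivAt_radialLaplacian hs hsr hf m).deriv]
  push_cast
  module

theorem deriv_radialHelmholtz (hs : ContDiffAt 𝕜 2 s r) (hsr : s r ≠ 0)
    (hf : ContDiffAt 𝕜 3 f r) (c z : 𝕜') (j : ℕ) :
    deriv (radialHelmholtz s c z j f) r =
      -deriv (radialLaplacian s (2 * j) f) r - ((j : 𝕜') ^ 2 * c + z) • deriv f r :=
  ((hasDerivAt_radialLaplacian hs hsr hf (2 * j)).differentiableAt.hasDerivAt.neg.fun_sub
    ((hf.differentiableAt three_ne_zero).hasDerivAt.fun_const_smul _)).deriv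

theorem stmt_3_general {c : 𝕜'} (hs : ContDiffAt 𝕜 2 s r) (hsr : s r ≠ 0)
    (hs'' : deriv (deriv s) r = c * s r) (hf : ContDiffAt 𝕜 3 f r) (z : 𝕜') (j : ℕ) :
    radialHelmholtz s c z (j + 1) (fun x => (s x)⁻¹ • deriv f x) r =
      (s r)⁻¹ • deriv (radialHelmholtz s c z j f) r := by
  have hc : deriv (deriv s) r / s r = c := by rw [hs'', mul_div_cancel_right₀ c hsr]
  rw [radialHelmholtz, mul_add_one, radialLaplacian_add_two_inv_smul_deriv hs hsr hf, hc,
    deriv_radialHelmholtz hs hsr hf]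
  push_cast
  module

end WarpedProduct

theorem deriv_sinh_mul_div (κ : ℂ) :
    deriv (fun x : ℝ => Complex.sinh (κ * x) / κ) = fun x : ℝ => κ * Complex.cosh (κ * x) / κ := by
  ext x
  rw [((hasDerivAt_const_mul κ).csinh.comp_ofReal.div_const κ).deriv, mul_comm]

theorem deriv_deriv_sinh_mul_div (κ : ℂ) (r : ℝ) :
    deriv (deriv fun x : ℝ => Complex.sinh (κ * x) / κ) r =
      κ ^ 2 * (Complex.sinh (κ * r) / κ) := by
  rw [deriv_sinh_mul_div,
    (((hasDerivAt_const_mul κ).ccosh.comp_ofReal.const_mul κ).div_const κ).deriv]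
  ring

theorem contDiff_sinh_mul_div (κ : ℂ) :
    ContDiff ℝ 2 fun x : ℝ => Complex.sinh (κ * x) / κ :=
  ((Complex.contDiff_sinh.restrict_scalars ℝ).comp
    (contDiff_const.mul Complex.ofRealCLM.contDiff)).div_const κ

theorem sinh_mul_div_ne_zero {κ r : ℝ} (hκ : κ ≠ 0) (hr : r ≠ 0) :
    Complex.sinh (κ * r) / κ ≠ 0 := by
  exact_mod_cast div_ne_zero (Real.sinh_ne_zero.2 (mul_ne_zero hκ hr)) hκ

/-- Intertwining relation in the proof of Lemma 7.1: with `s(r) = sinh(κr)/κ` and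
`Q_j f = -s^{-2j}(s^{2j} f')' - (j²κ² + λ²) f`, one has
`Q_{j+1}(s⁻¹ f') = s⁻¹ (Q_j f)'` on `(0,∞)`. -/
theorem stmt_3 (κ : ℝ) (hκ : 0 < κ) (lam : ℂ)
    (s : ℝ → ℝ) (hs : ∀ r, s r = Real.sinh (κ * r) / κ)
    (Q : ℕ → (ℝ → ℂ) → (ℝ → ℂ))
    (hQ : ∀ j (f : ℝ → ℂ) (r : ℝ),
      Q j f r = -(((s r : ℂ)) ^ (2 * j))⁻¹ *
          deriv (fun ρ => ((s ρ : ℂ)) ^ (2 * j) * deriv f ρ) r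
        - ((j : ℂ) ^ 2 * (κ : ℂ) ^ 2 + lam ^ 2) * f r)
    (j : ℕ) (f : ℝ → ℂ) (hf : ContDiffOn ℝ (⊤ : ℕ∞) f (Set.Ioi 0))
    (r : ℝ) (hr : 0 < r) :
    Q (j + 1) (fun ρ => ((s ρ : ℂ))⁻¹ * deriv f ρ) r
      = ((s r : ℂ))⁻¹ * deriv (Q j f) r := by
  obtain rfl : s = fun r => Real.sinh (κ * r) / κ := funext hs
  obtain rfl : Q = radialHelmholtz (fun x : ℝ => Complex.sinh (κ * x) / κ) (κ ^ 2) (lam ^ 2) := by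
    ext j f r
    simp [hQ, radialHelmholtz, radialLaplacian]
  have hf3 : ContDiffAt ℝ 3 f r := (contDiffOn_infty.1 hf 3).contDiffAt (Ioi_mem_nhds hr)
  simpa using stmt_3_general (contDiff_sinh_mul_div κ).contDiffAt
    (sinh_mul_div_ne_zero hκ.ne' hr.ne') (deriv_deriv_sinh_mul_div κ r) hf3 (lam ^ 2) j
end

section
/- For ρ̃ > 0 and t > 0, set a(ρ̃,t) = (1/(2(t+5))) · log( (cosh(ρ̃t) − 1)/(4(cosh(3ρ̃) − 1)) ) and A(ρ̃) = sup_{t>0} a(ρ̃,t). Then A is monotonically increasing on (0,∞): if 0 < ρ̃₁ ≤ ρ̃₂ then A(ρ̃₁) ≤ A(ρ̃₂). -/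
/-!
Since `cosh x - 1 = 2 * sinh (x / 2) ^ 2`, the argument of the logarithm is, up to a constant, the
square of a quotient `sinh (t * x) / sinh (s * x)`. For `0 < s ≤ t` this quotient increases in `x`:
by the addition formulas the sign of its derivative is that of
`(t - s) * sinh ((t + s) * x) - (t + s) * sinh ((t - s) * x)`, which is nonnegative because `sinh`
is convex on `[0, ∞)`. Hence `a(ρ̃, t)` increases in `ρ̃` for every `t ≥ 3`, while for `t ≤ 3` it is
nonpositive and so lies below the nonnegative value `a(ρ̃', 6)` for every `ρ̃' > 0`.
-/

open Real Set

section Hyperbolic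

variable {c s t x : ℝ}

theorem convexOn_sinh : ConvexOn ℝ (Ici 0) sinh := by
  refine MonotoneOn.convexOn_of_deriv (convex_Ici 0) continuous_sinh.continuousOn
    differentiable_sinh.differentiableOn ?_
  rw [Real.deriv_sinh]
  exact cosh_strictMonoOn.monotoneOn.mono interior_subset

theorem sinh_mul_le (hc₀ : 0 ≤ c) (hc₁ : c ≤ 1) (hx : 0 ≤ x) : sinh (c * x) ≤ c * sinh x := by
  simpa using convexOn_sinh.2 (mem_Ici.2 hx) self_mem_Ici hc₀ (sub_nonneg.2 hc₁)
    (add_sub_cancel c 1)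

theorem cosh_sub_one (x : ℝ) : cosh x - 1 = 2 * sinh (x / 2) ^ 2 := by
  have h := cosh_two_mul (x / 2)
  rw [mul_div_cancel₀ x two_ne_zero, cosh_sq] at h
  linarith

theorem cosh_sub_one_pos (hx : 0 < x) : 0 < cosh x - 1 :=
  sub_pos.2 (one_lt_cosh.2 hx.ne')

theorem cosh_mul_sub_one_le (hc₀ : 0 ≤ c) (hc₁ : c ≤ 1) (hx : 0 ≤ x) :
    cosh (c * x) - 1 ≤ c ^ 2 * (cosh x - 1) := by
  have hsinh : 0 ≤ sinh (c * (x / 2)) := sinh_nonneg_iff.2 (by positivity)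
  calc cosh (c * x) - 1 = 2 * sinh (c * (x / 2)) ^ 2 := by rw [cosh_sub_one, mul_div_assoc]
    _ ≤ 2 * (c * sinh (x / 2)) ^ 2 :=
      mul_le_mul_of_nonneg_left
        (pow_le_pow_left₀ hsinh (sinh_mul_le hc₀ hc₁ (by positivity)) 2) zero_le_two
    _ = c ^ 2 * (cosh x - 1) := by rw [cosh_sub_one]; ring

theorem log_cosh_sub_one_le (hx : 0 < x) : log (cosh x - 1) ≤ x := by
  rw [log_le_iff_le_exp (cosh_sub_one_pos hx), ← cosh_add_sinh]
  linarith [sinh_pos_iff.2 hx]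

theorem mul_sinh_mul_cosh_le (hs : 0 < s) (hst : s ≤ t) (hx : 0 ≤ x) :
    s * (sinh (t * x) * cosh (s * x)) ≤ t * (cosh (t * x) * sinh (s * x)) := by
  have hpos : 0 < t + s := by linarith
  have hconvex : sinh ((t - s) * x) ≤ (t - s) / (t + s) * sinh ((t + s) * x) := by
    convert sinh_mul_le (c := (t - s) / (t + s)) (x := (t + s) * x)
      (div_nonneg (by linarith) hpos.le) ((div_le_one hpos).2 (by linarith)) (by positivity) using 2
    field_simp
  rw [div_mul_eq_mul_div, le_div_iff₀ hpos, sub_mul t s x, add_mul t s x, sinh_sub, sinh_add]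
    at hconvex
  linarith

theorem monotoneOn_sinh_mul_div_sinh_mul (hs : 0 < s) (hst : s ≤ t) :
    MonotoneOn (fun x => sinh (t * x) / sinh (s * x)) (Ioi 0) := by
  have hderiv : ∀ x ∈ Ioi (0 : ℝ), HasDerivAt (fun x => sinh (t * x) / sinh (s * x))
      ((cosh (t * x) * (t * 1) * sinh (s * x) - sinh (t * x) * (cosh (s * x) * (s * 1))) /
        sinh (s * x) ^ 2) x := fun x hx =>
    ((hasDerivAt_id x).const_mul t).sinh.div ((hasDerivAt_id x).const_mul s).sinh
      (sinh_pos_iff.2 (mul_pos hs hx)).ne'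
  refine monotoneOn_of_hasDerivWithinAt_nonneg (convex_Ioi 0)
    (fun x hx => (hderiv x hx).continuousAt.continuousWithinAt)
    (fun x hx => (hderiv x (interior_subset hx)).hasDerivWithinAt) fun x hx => ?_
  have hnum := mul_sinh_mul_cosh_le hs hst (interior_subset hx : x ∈ Ioi 0).le
  exact div_nonneg (by linarith) (sq_nonneg _)

theorem monotoneOn_cosh_mul_sub_one_div (hs : 0 < s) (hst : s ≤ t) :
    MonotoneOn (fun x => (cosh (t * x) - 1) / (cosh (s * x) - 1)) (Ioi 0) := by
  have hsq (x : ℝ) : (cosh (t * x) - 1) / (cosh (s * x) - 1) =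
      (sinh (t / 2 * x) / sinh (s / 2 * x)) ^ 2 := by
    rw [cosh_sub_one, cosh_sub_one, mul_div_mul_left _ _ two_ne_zero, div_pow,
      mul_div_right_comm, mul_div_right_comm]
  intro x hx y hy hxy
  have hx₀ : 0 < x := hx
  simp only [hsq]
  have hnonneg : 0 ≤ sinh (t / 2 * x) / sinh (s / 2 * x) :=
    div_nonneg (sinh_nonneg_iff.2 (mul_nonneg (by linarith) hx₀.le))
      (sinh_nonneg_iff.2 (by positivity))
  exact pow_le_pow_left₀ hnonneg
    (monotoneOn_sinh_mul_div_sinh_mul (half_pos hs) (by linarith) hx hy hxy) 2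

end Hyperbolic

/-- The function `a(ρ̃, t)` whose supremum over `t > 0` is the resonance-width bound `A(ρ̃)`, with
parameters `s`, `c`, `b` in place of the constants `3`, `4`, `5`. -/
noncomputable def widthBound (s c b ρ t : ℝ) : ℝ :=
  1 / (2 * (t + b)) * log ((cosh (ρ * t) - 1) / (c * (cosh (s * ρ) - 1)))

namespace widthBound

variable {s c b ρ ρ₁ ρ₂ t : ℝ}

theorem nonpos_of_le (hs : 0 < s) (hc : 1 ≤ c) (hb : 0 < b) (hρ : 0 < ρ) (ht : 0 < t)
    (hts : t ≤ s) : widthBound s c b ρ t ≤ 0 := by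
  have hnum : 0 < cosh (ρ * t) - 1 := cosh_sub_one_pos (by positivity)
  have hden : 0 < cosh (s * ρ) - 1 := cosh_sub_one_pos (by positivity)
  have hcosh : cosh (ρ * t) ≤ cosh (s * ρ) := by
    rw [mul_comm s]
    exact cosh_strictMonoOn.monotoneOn (mem_Ici.2 (by positivity)) (mem_Ici.2 (by positivity))
      (by gcongr)
  refine mul_nonpos_of_nonneg_of_nonpos (by positivity) (log_nonpos (by positivity) ?_)
  rw [div_le_one (by positivity)]
  nlinarith

theorem nonneg_sqrt_mul (hs : 0 < s) (hc : 1 ≤ c) (hb : 0 < b) (hρ : 0 < ρ) :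
    0 ≤ widthBound s c b ρ (√c * s) := by
  have hc₀ : 0 < c := by linarith
  have hden : 0 < cosh (s * ρ) - 1 := cosh_sub_one_pos (by positivity)
  have hscale : cosh (s * ρ) - 1 ≤ c⁻¹ * (cosh (ρ * (√c * s)) - 1) := by
    convert cosh_mul_sub_one_le (c := (√c)⁻¹) (x := ρ * (√c * s)) (by positivity)
      (inv_le_one_of_one_le₀ (one_le_sqrt.2 hc)) (by positivity) using 3
    · field_simp
    · rw [inv_pow, sq_sqrt hc₀.le]
  refine mul_nonneg (by positivity) (log_nonneg ?_)
  rwa [one_le_div (by positivity), ← le_inv_mul_iff₀ hc₀]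

theorem monotoneOn_of_le (hs : 0 < s) (hc : 0 < c) (hb : 0 < b) (hst : s ≤ t) :
    MonotoneOn (fun ρ => widthBound s c b ρ t) (Ioi 0) := by
  intro ρ₁ hρ₁ ρ₂ hρ₂ hρ
  have hρ₁_pos : 0 < ρ₁ := hρ₁
  have ht : 0 < t := hs.trans_le hst
  have hnum : 0 < cosh (ρ₁ * t) - 1 := cosh_sub_one_pos (by positivity)
  have hden : 0 < cosh (s * ρ₁) - 1 := cosh_sub_one_pos (by positivity)
  have hquot : (cosh (ρ₁ * t) - 1) / (cosh (s * ρ₁) - 1) ≤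
      (cosh (ρ₂ * t) - 1) / (cosh (s * ρ₂) - 1) := by
    simpa only [mul_comm t] using monotoneOn_cosh_mul_sub_one_div hs hst hρ₁ hρ₂ hρ
  refine mul_le_mul_of_nonneg_left (log_le_log (by positivity) ?_) (by positivity)
  simpa only [div_mul_eq_div_div_swap] using div_le_div_of_nonneg_right hquot hc.le

theorem bddAbove_range (hs : 0 < s) (hc : 0 < c) (hb : 0 < b) (hρ : 0 < ρ) :
    BddAbove (range fun t : Ioi (0 : ℝ) => widthBound s c b ρ t) := by
  set L := |log (c * (cosh (s * ρ) - 1))|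
  refine ⟨(ρ + L / b) / 2, ?_⟩
  rintro _ ⟨⟨t, ht : 0 < t⟩, rfl⟩
  have hnum : 0 < cosh (ρ * t) - 1 := cosh_sub_one_pos (by positivity)
  have hden : 0 < cosh (s * ρ) - 1 := cosh_sub_one_pos (by positivity)
  have hlog : log ((cosh (ρ * t) - 1) / (c * (cosh (s * ρ) - 1))) ≤ (ρ + L / b) * (t + b) :=
    calc log ((cosh (ρ * t) - 1) / (c * (cosh (s * ρ) - 1)))
        = log (cosh (ρ * t) - 1) - log (c * (cosh (s * ρ) - 1)) :=
          log_div hnum.ne' (by positivity)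
      _ ≤ ρ * t + L := by
          linarith [log_cosh_sub_one_le (mul_pos hρ ht), neg_abs_le (log (c * (cosh (s * ρ) - 1)))]
      _ ≤ ρ * t + L + (ρ * b + L / b * t) := le_add_of_nonneg_right (by positivity)
      _ = (ρ + L / b) * (t + b) := by field_simp; ring
  calc widthBound s c b ρ t ≤ 1 / (2 * (t + b)) * ((ρ + L / b) * (t + b)) :=
        mul_le_mul_of_nonneg_left hlog (by positivity)
    _ = (ρ + L / b) / 2 := by field_simp

theorem exists_le (hs : 0 < s) (hc : 1 ≤ c) (hb : 0 < b) (hρ₁ : 0 < ρ₁) (hρ : ρ₁ ≤ ρ₂)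
    (ht : 0 < t) : ∃ t' : Ioi (0 : ℝ), widthBound s c b ρ₁ t ≤ widthBound s c b ρ₂ t' := by
  have hρ₂ : 0 < ρ₂ := hρ₁.trans_le hρ
  have hc₀ : 0 < c := by linarith
  rcases le_total t s with hts | hst
  · exact ⟨⟨√c * s, mem_Ioi.2 (by positivity)⟩,
      (nonpos_of_le hs hc hb hρ₁ ht hts).trans (nonneg_sqrt_mul hs hc hb hρ₂)⟩
  · exact ⟨⟨t, ht⟩, monotoneOn_of_le hs hc₀ hb hst hρ₁ hρ₂ hρ⟩

theorem monotoneOn_iSup (hs : 0 < s) (hc : 1 ≤ c) (hb : 0 < b) :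
    MonotoneOn (fun ρ => ⨆ t : Ioi (0 : ℝ), widthBound s c b ρ t) (Ioi 0) :=
  fun _ hρ₁ _ hρ₂ hρ => ciSup_mono_of_forall_exists
    (bddAbove_range hs (by linarith) hb hρ₂) fun t => exists_le hs hc hb hρ₁ hρ t.2

end widthBound

/-- Section 5: `A(ρ̃) = sup_{t>0} a(ρ̃,t)` with
`a(ρ̃,t) = log((cosh(ρ̃t)-1)/(4(cosh(3ρ̃)-1)))/(2(t+5))` is monotonically increasing
on `(0,∞)`. -/
theorem stmt_17 (a : ℝ → ℝ → ℝ)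
    (ha : ∀ ρ t : ℝ, a ρ t =
      (1 / (2 * (t + 5))) * Real.log ((Real.cosh (ρ * t) - 1) / (4 * (Real.cosh (3 * ρ) - 1))))
    (A : ℝ → ℝ)
    (hA : ∀ ρ : ℝ, A ρ = sSup {y : ℝ | ∃ t : ℝ, 0 < t ∧ y = a ρ t}) :
    ∀ ρ₁ ρ₂ : ℝ, 0 < ρ₁ → ρ₁ ≤ ρ₂ → A ρ₁ ≤ A ρ₂ := by
  have hA_iSup (ρ : ℝ) : A ρ = ⨆ t : Ioi (0 : ℝ), widthBound 3 4 5 ρ t := by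
    rw [hA, ← sSup_image']
    congr 1
    ext y
    simp only [mem_ofPred_eq, mem_image, mem_Ioi, ha, widthBound, eq_comm]
  intro ρ₁ ρ₂ hρ₁ hρ
  rw [hA_iSup, hA_iSup]
  exact widthBound.monotoneOn_iSup (by norm_num) (by norm_num) (by norm_num) hρ₁
    (hρ₁.trans_le hρ) hρ
end
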